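/- Let N ∈ ℕ, let U : ℝ² → ℝ be measurable, vanish outside Π, and satisfy ∫_Π U(y)² dy = 1, and let w_1, …, w_N : ℝ → ℝ be measurable with ∫_ℝ w_j w_k dζ = δ_{jk} and |w_j(ζ)| ≤ C e^{−b|ζ|} for all ζ and some C, b > 0. Then there exists c_N > 0 such that for every H ≥ 1 and all j, k ∈ {1, …, N} the ellipsoidal trial functions satisfy |∫_{Q^H} Φ_j^H(x) Φ_k^H(x) dx − δ_{jk}| ≤ c_N H^{−1/2}. -/

import Mathlib

noncomputable section
open MeasureTheory Real

abbrev E2 : Type := EuclideanSpace ℝ (Fin 2)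
abbrev E3 : Type := EuclideanSpace ℝ (Fin 3)

/-- The planar cross `Π = {y ∈ ℝ² : |y₁| < 1/2 or |y₂| < 1/2}`. -/
def planarCross : Set E2 := {y | |y 0| < 1 / 2 ∨ |y 1| < 1 / 2}

/-- The ellipsoidal cruciform waveguide
`Q^H = {x ∈ ℝ³ : x₂² + x₃²/H² < 1/4 or x₁² + x₃²/H² < 1/4}`. -/
def ellipticWaveguide (H : ℝ) : Set E3 :=
  {x | (x 1) ^ 2 + (x 2) ^ 2 / H ^ 2 < 1 / 4 ∨ (x 0) ^ 2 + (x 2) ^ 2 / H ^ 2 < 1 / 4}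

/-- The width function `h(z) = √(1 − 4z²/H²)` of the ellipsoidal waveguide. -/
def hEll (H z : ℝ) : ℝ := Real.sqrt (1 - 4 * z ^ 2 / H ^ 2)

/-- The ellipsoidal trial function
`Φ^H(x) = H^{−1/8} χ(2H^{−1/2}ζ) w(ζ) U(x₁/h(x₃), x₂/h(x₃))`, `ζ = H^{−1/4}x₃`,
for `|x₃| < H/2`, extended by zero for `|x₃| ≥ H/2`. -/
def trialEll (χ : ℝ → ℝ) (w : ℝ → ℝ) (U : E2 → ℝ) (H : ℝ) (x : E3) : ℝ :=
  if |x 2| < H / 2 then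
    H ^ (-(1 : ℝ) / 8) * χ (2 * H ^ (-(1 : ℝ) / 2) * (H ^ (-(1 : ℝ) / 4) * x 2)) *
      w (H ^ (-(1 : ℝ) / 4) * x 2) *
      U ((EuclideanSpace.equiv (Fin 2) ℝ).symm
          ![x 0 / hEll H (x 2), x 1 / hEll H (x 2)])
  else 0

lemma aux_e3 (f : ℝ × E2 → ℝ) :
    ∫ x : E3, f (x 2, WithLp.toLp 2 ![x 0, x 1]) = ∫ p : ℝ × E2, f p := by
  have h1 := EuclideanSpace.volume_preserving_symm_measurableEquiv_toLp (Fin 3)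
  have h2 := volume_preserving_piFinSuccAbove (fun _ : Fin 3 => ℝ) 2
  have h3 : MeasurePreserving (MeasurableEquiv.prodCongr (MeasurableEquiv.refl ℝ)
      (MeasurableEquiv.toLp 2 (Fin 2 → ℝ))) (volume : Measure (ℝ × (Fin 2 → ℝ)))
      (volume : Measure (ℝ × E2)) :=
    (MeasurePreserving.id volume).prod
      (EuclideanSpace.volume_preserving_symm_measurableEquiv_toLp (Fin 2)).symm
  have h := (h1.trans h2).trans h3
  rw [← h.integral_comp' f]
  refine integral_congr_ae (Filter.Eventually.of_forall fun x => ?_)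
  have : ![x 0, x 1] = fun i => x (Fin.succAbove 2 i) := by
    funext i
    fin_cases i <;> rfl
  simp only [this]
  rfl

lemma aux_scale (V : E2 → ℝ) (hV : Integrable V) (hV1 : ∫ y, V y = 1) (h : ℝ) (hh : 0 < h) :
    Integrable (fun y : E2 => V (h⁻¹ • y)) ∧ ∫ y : E2, V (h⁻¹ • y) = h ^ 2 := by
  refine ⟨(integrable_comp_smul_iff volume V (inv_ne_zero hh.ne')).2 hV, ?_⟩
  rw [Measure.integral_comp_smul, hV1]
  simp [abs_of_pos hh]

lemma aux_fubini (a h : ℝ → ℝ) (ha : Measurable a) (hh : Measurable h)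
    (V : E2 → ℝ) (hVm : Measurable V) (hV : Integrable V) (hV1 : ∫ y, V y = 1)
    (hV0 : ∀ y, 0 ≤ V y) (hpos : ∀ z, a z ≠ 0 → 0 < h z)
    (hInteg : Integrable (fun z => a z * h z ^ 2)) :
    ∫ x : E3, a (x 2) * V ((h (x 2))⁻¹ • WithLp.toLp 2 ![x 0, x 1]) = ∫ z, a z * h z ^ 2 := by
  rw [aux_e3 (fun p => a p.1 * V ((h p.1)⁻¹ • p.2))]
  have hm : Measurable (fun p : ℝ × E2 => a p.1 * V ((h p.1)⁻¹ • p.2)) := by fun_prop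
  have hin : ∀ z, ∫ y : E2, a z * V ((h z)⁻¹ • y) = a z * h z ^ 2 := by
    intro z
    rw [integral_const_mul]
    by_cases hz : a z = 0
    · simp [hz]
    · rw [(aux_scale V hV hV1 _ (hpos z hz)).2]
  have hI : Integrable (fun p : ℝ × E2 => a p.1 * V ((h p.1)⁻¹ • p.2))
      ((volume : Measure ℝ).prod (volume : Measure E2)) := by
    rw [integrable_prod_iff hm.aestronglyMeasurable]
    constructor
    · refine Filter.Eventually.of_forall fun z => ?_
      by_cases hz : a z = 0
      · simp [hz]
      · exact (aux_scale V hV hV1 _ (hpos z hz)).1.const_mul (a z)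
    · have : (fun z => ∫ y : E2, ‖a z * V ((h z)⁻¹ • y)‖) = fun z => ‖a z * h z ^ 2‖ := by
        funext z
        simp only [norm_mul, Real.norm_eq_abs, abs_of_nonneg (hV0 _), abs_pow, sq_abs]
        rw [integral_const_mul]
        by_cases hz : a z = 0
        · simp [hz]
        · rw [(aux_scale V hV hV1 _ (hpos z hz)).2]
      simp only [this]
      exact hInteg.norm
  rw [Measure.volume_eq_prod, integral_prod _ hI]
  simp only [hin]

/-- the one-dimensional multiplier -/
def gMul (χ : ℝ → ℝ) (s ζ : ℝ) : ℝ :=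
  if |ζ| * s ^ 3 < 1 / 2 then χ (2 * s ^ 2 * ζ) ^ 2 * (1 - 4 * ζ ^ 2 * s ^ 6) else 0

lemma gMul_bound (χ : ℝ → ℝ) (hχ01 : ∀ τ, 0 ≤ χ τ ∧ χ τ ≤ 1)
    (hχ1 : ∀ τ : ℝ, |τ| ≤ 1 / 4 → χ τ = 1) (s : ℝ) (hs : 0 < s) (hs1 : s ≤ 1) (ζ : ℝ) :
    |gMul χ s ζ - 1| ≤ 64 * ζ ^ 2 * s ^ 2 := by
  have hs2 : s ^ 2 ≤ 1 := pow_le_one₀ hs.le hs1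
  by_cases hz : s ^ 2 * |ζ| ≤ 1 / 8
  · have h1 : |ζ| * s ^ 3 < 1 / 2 := by
      have : |ζ| * s ^ 3 = (s ^ 2 * |ζ|) * s := by ring
      rw [this]
      nlinarith [mul_nonneg (sq_nonneg s) (abs_nonneg ζ)]
    have h2 : χ (2 * s ^ 2 * ζ) = 1 := by
      apply hχ1
      rw [abs_mul, abs_of_pos (by positivity : 0 < 2 * s ^ 2)]
      linarith
    rw [gMul, if_pos h1, h2]
    have e : (1 : ℝ) ^ 2 * (1 - 4 * ζ ^ 2 * s ^ 6) - 1 = -(4 * ζ ^ 2 * s ^ 6) := by ring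
    rw [e, abs_neg, abs_of_nonneg (by positivity)]
    have h3 : s ^ 6 ≤ s ^ 2 := pow_le_pow_of_le_one hs.le hs1 (by norm_num)
    have := mul_le_mul_of_nonneg_left h3 (sq_nonneg ζ)
    nlinarith [mul_nonneg (sq_nonneg ζ) (sq_nonneg s)]
  · push Not at hz
    have h1 : 1 ≤ 64 * ζ ^ 2 * s ^ 2 := by
      have a1 : (1 / 8 : ℝ) ^ 2 ≤ (s ^ 2 * |ζ|) ^ 2 := by gcongr
      have a2 : (s ^ 2 * |ζ|) ^ 2 = s ^ 2 * (s ^ 2 * ζ ^ 2) := by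
        rw [mul_pow, sq_abs]; ring
      nlinarith [mul_nonneg (sq_nonneg s) (sq_nonneg ζ)]
    refine le_trans ?_ h1
    have h0 : 0 ≤ gMul χ s ζ ∧ gMul χ s ζ ≤ 1 := by
      rw [gMul]
      split_ifs with hc
      · have c1 : 0 ≤ χ (2 * s ^ 2 * ζ) ^ 2 := sq_nonneg _
        have c2 : χ (2 * s ^ 2 * ζ) ^ 2 ≤ 1 := pow_le_one₀ (hχ01 _).1 (hχ01 _).2
        have c3 : (|ζ| * s ^ 3) ^ 2 ≤ (1 / 2) ^ 2 := by gcongr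
        have c4 : (|ζ| * s ^ 3) ^ 2 = ζ ^ 2 * s ^ 6 := by
          rw [mul_pow, sq_abs]; ring
        have c5 : 0 ≤ ζ ^ 2 * s ^ 6 := by positivity
        constructor
        · apply mul_nonneg c1; linarith
        · apply mul_le_one₀ c2 <;> linarith
      · simp
    rw [abs_le]; constructor <;> linarith [h0.1, h0.2]

lemma gMul_meas (χ : ℝ → ℝ) (hχ : Measurable χ) (s : ℝ) : Measurable (gMul χ s) := by
  unfold gMul
  refine Measurable.ite (measurableSet_lt (by fun_prop) (by fun_prop)) (by fun_prop) (by fun_prop)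

lemma aux_exp (b : ℝ) (hb : 0 < b) (t : ℝ) (ht : 0 ≤ t) :
    (Real.exp (-b * t)) ^ 2 * (1 + t ^ 2) ^ 2 ≤ 2 + 48 / (2 * b) ^ 4 := by
  have h1 : (Real.exp (-b * t)) ^ 2 = (Real.exp (2 * b * t))⁻¹ := by
    rw [← Real.exp_nat_mul, ← Real.exp_neg]; congr 1; push_cast; ring
  have h2 := Real.pow_div_factorial_le_exp (2 * b * t) (by positivity) 4
  have h3 : 1 ≤ Real.exp (2 * b * t) := Real.one_le_exp (by positivity)
  rw [h1, inv_mul_le_iff₀ (Real.exp_pos _)]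
  have h4 : t ^ 4 ≤ 24 / (2 * b) ^ 4 * Real.exp (2 * b * t) := by
    rw [div_mul_eq_mul_div, le_div_iff₀ (by positivity)]
    norm_num [Nat.factorial] at h2
    nlinarith
  have e : 48 / (2 * b) ^ 4 = 2 * (24 / (2 * b) ^ 4) := by ring
  rw [e]
  nlinarith [sq_nonneg (1 - t ^ 2)]

lemma aux_1d (χ : ℝ → ℝ) (hχ : Measurable χ) (hχ01 : ∀ τ, 0 ≤ χ τ ∧ χ τ ≤ 1)
    (hχ1 : ∀ τ : ℝ, |τ| ≤ 1 / 4 → χ τ = 1) (s : ℝ) (hs : 0 < s) (hs1 : s ≤ 1)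
    (P : ℝ → ℝ) (hP : Measurable P) (K : ℝ) (hK : ∀ ζ, |P ζ| * (1 + ζ ^ 2) ^ 2 ≤ K) :
    Integrable (fun ζ => P ζ * gMul χ s ζ) ∧
      |(∫ ζ, P ζ * gMul χ s ζ) - ∫ ζ, P ζ| ≤ 64 * K * π * s ^ 2 := by
  have hgm := gMul_meas χ hχ s
  have hK0 : 0 ≤ K := le_trans (by positivity) (hK 0)
  have hb1 : ∀ ζ, |P ζ| ≤ K * (1 + ζ ^ 2)⁻¹ := by
    intro ζ
    rw [← div_eq_mul_inv, le_div_iff₀ (by positivity)]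
    refine le_trans ?_ (hK ζ)
    gcongr
    nlinarith [sq_nonneg ζ, sq_nonneg (ζ ^ 2)]
  have hb2 : ∀ ζ, |P ζ * gMul χ s ζ - P ζ| ≤ 64 * s ^ 2 * K * (1 + ζ ^ 2)⁻¹ := by
    intro ζ
    have e : P ζ * gMul χ s ζ - P ζ = P ζ * (gMul χ s ζ - 1) := by ring
    rw [e, abs_mul, ← div_eq_mul_inv, le_div_iff₀ (by positivity)]
    have h1 := gMul_bound χ hχ01 hχ1 s hs hs1 ζ
    calc |P ζ| * |gMul χ s ζ - 1| * (1 + ζ ^ 2)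
        ≤ |P ζ| * (64 * ζ ^ 2 * s ^ 2) * (1 + ζ ^ 2) := by gcongr
      _ ≤ |P ζ| * (64 * (1 + ζ ^ 2) * s ^ 2) * (1 + ζ ^ 2) := by
          gcongr; linarith
      _ = 64 * s ^ 2 * (|P ζ| * (1 + ζ ^ 2) ^ 2) := by ring
      _ ≤ _ := by gcongr; exact hK ζ
  have hPi : Integrable P :=
    (integrable_inv_one_add_sq.const_mul K).mono' hP.aestronglyMeasurable
      (Filter.Eventually.of_forall hb1)
  have hD : Integrable (fun ζ => P ζ * gMul χ s ζ - P ζ) :=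
    (integrable_inv_one_add_sq.const_mul (64 * s ^ 2 * K)).mono'
      (by fun_prop) (Filter.Eventually.of_forall hb2)
  have hI : Integrable (fun ζ => P ζ * gMul χ s ζ) := by
    have := hD.add hPi
    refine this.congr (Filter.Eventually.of_forall fun ζ => ?_)
    simp
  refine ⟨hI, ?_⟩
  rw [← integral_sub hI hPi, ← Real.norm_eq_abs]
  refine (norm_integral_le_of_norm_le (integrable_inv_one_add_sq.const_mul (64 * s ^ 2 * K))
    (Filter.Eventually.of_forall hb2)).trans ?_
  rw [integral_const_mul, integral_univ_inv_one_add_sq]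
  apply le_of_eq; ring

theorem elliptic_trial_almost_orthonormal
    (N : ℕ)
    (χ : ℝ → ℝ) (hχ : ContDiff ℝ (⊤ : ℕ∞) χ) (hχ01 : ∀ τ, 0 ≤ χ τ ∧ χ τ ≤ 1)
    (hχ1 : ∀ τ : ℝ, |τ| ≤ 1 / 4 → χ τ = 1) (hχ0 : ∀ τ : ℝ, 1 / 2 ≤ |τ| → χ τ = 0)
    (U : E2 → ℝ) (hUmeas : Measurable U)
    (hU0 : ∀ y ∉ planarCross, U y = 0)
    (hUnorm : ∫ y in planarCross, (U y) ^ 2 = 1)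
    (w : Fin N → ℝ → ℝ) (hwmeas : ∀ j, Measurable (w j))
    (horth : ∀ j k, ∫ ζ : ℝ, w j ζ * w k ζ = if j = k then (1 : ℝ) else 0)
    (C b : ℝ) (hC : 0 < C) (hb : 0 < b)
    (hdecay : ∀ j, ∀ ζ : ℝ, |w j ζ| ≤ C * Real.exp (-b * |ζ|)) :
    ∃ c : ℝ, 0 < c ∧ ∀ H : ℝ, 1 ≤ H → ∀ j k,
      |(∫ x in ellipticWaveguide H, trialEll χ (w j) U H x * trialEll χ (w k) U H x) -
          (if j = k then (1 : ℝ) else 0)| ≤ c * H ^ (-(1 : ℝ) / 2) := by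
  have hK0 : 0 < C ^ 2 * (2 + 48 / (2 * b) ^ 4) := by positivity
  refine ⟨64 * (C ^ 2 * (2 + 48 / (2 * b) ^ 4)) * π, by positivity, ?_⟩
  intro H hH j k
  have hH0 : 0 < H := by linarith
  have hχm : Measurable χ := hχ.continuous.measurable
  obtain ⟨s, hs⟩ : ∃ s, s = H ^ (-(1 : ℝ) / 4) := ⟨_, rfl⟩
  have hs0 : 0 < s := hs ▸ Real.rpow_pos_of_pos hH0 _
  have hs1 : s ≤ 1 := hs ▸ Real.rpow_le_one_of_one_le_of_nonpos hH (by norm_num)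
  have hr : H ^ (-(1 : ℝ) / 8) * H ^ (-(1 : ℝ) / 8) = s := by
    rw [hs, ← Real.rpow_add hH0]; norm_num
  have hs2 : H ^ (-(1 : ℝ) / 2) = s ^ 2 := by
    rw [hs, ← Real.rpow_natCast, ← Real.rpow_mul hH0.le]; norm_num
  have hs4 : H⁻¹ = s ^ 4 := by
    rw [hs, ← Real.rpow_natCast, ← Real.rpow_mul hH0.le]; norm_num [Real.rpow_neg_one]
  have hlt : ∀ z : ℝ, |z| < H / 2 ↔ |s * z| * s ^ 3 < 1 / 2 := by
    intro z
    have e : |s * z| * s ^ 3 = |z| / H := by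
      rw [abs_mul, abs_of_pos hs0, div_eq_mul_inv, hs4]; ring
    rw [e, div_lt_iff₀ hH0]
    constructor <;> intro h <;> linarith
  have hharg : ∀ z : ℝ, 1 - 4 * z ^ 2 / H ^ 2 = 1 - 4 * (s * z) ^ 2 * s ^ 6 := by
    intro z
    rw [div_eq_mul_inv, ← inv_pow, hs4]; ring
  have hargpos : ∀ z : ℝ, |z| < H / 2 → 0 < 1 - 4 * z ^ 2 / H ^ 2 := by
    intro z hz
    have h1 : z ^ 2 < (H / 2) ^ 2 := by
      rw [← sq_abs z]; gcongr
    have : 4 * z ^ 2 / H ^ 2 < 1 := by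
      rw [div_lt_one (by positivity)]; linarith
    linarith
  have hhpos : ∀ z : ℝ, |z| < H / 2 → 0 < hEll H z := fun z hz => Real.sqrt_pos.2 (hargpos z hz)
  have hhsq : ∀ z : ℝ, |z| < H / 2 → hEll H z ^ 2 = 1 - 4 * z ^ 2 / H ^ 2 :=
    fun z hz => Real.sq_sqrt (hargpos z hz).le
  have hhm : Measurable (hEll H) := by unfold hEll; fun_prop
  have hUarg : ∀ x : E3, ((EuclideanSpace.equiv (Fin 2) ℝ).symm
          ![x 0 / hEll H (x 2), x 1 / hEll H (x 2)]) =
      (hEll H (x 2))⁻¹ • (WithLp.toLp 2 ![x 0, x 1] : E2) := by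
    intro x
    ext i
    fin_cases i <;> simp [div_eq_inv_mul]
  -- support
  have hcross : ∀ u z : ℝ, |z| < H / 2 → (|u / hEll H z| < 1 / 2 ↔ u ^ 2 + z ^ 2 / H ^ 2 < 1 / 4) := by
    intro u z hz
    have hp := hhpos z hz
    rw [abs_div, abs_of_pos hp, div_lt_iff₀ hp, ← abs_of_pos (show 0 < 1 / 2 * hEll H z by positivity),
      ← sq_lt_sq, mul_pow, hhsq z hz]
    have e : 4 * z ^ 2 / H ^ 2 = 4 * (z ^ 2 / H ^ 2) := by ring
    rw [e]
    constructor <;> intro h <;> linarith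
  have hsupp : ∀ x ∉ ellipticWaveguide H,
      trialEll χ (w j) U H x * trialEll χ (w k) U H x = 0 := by
    intro x hx
    by_cases hz : |x 2| < H / 2
    · have : U ((EuclideanSpace.equiv (Fin 2) ℝ).symm
          ![x 0 / hEll H (x 2), x 1 / hEll H (x 2)]) = 0 := by
        apply hU0
        intro hc
        apply hx
        rcases hc with hc | hc
        · right; exact (hcross _ _ hz).1 (by simpa using hc)
        · left; exact (hcross _ _ hz).1 (by simpa using hc)
      simp only [trialEll, this, mul_zero, ite_self]
    · simp only [trialEll, if_neg hz, mul_zero]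
  rw [setIntegral_eq_integral_of_forall_compl_eq_zero hsupp]
  -- U
  have hU1 : ∫ y, U y ^ 2 = 1 := by
    rw [← hUnorm, setIntegral_eq_integral_of_forall_compl_eq_zero]
    intro y hy; rw [hU0 y hy]; norm_num
  have hUi : Integrable (fun y => U y ^ 2) := by
    by_contra h
    rw [integral_undef h] at hU1
    norm_num at hU1
  obtain ⟨a, ha⟩ : ∃ a : ℝ → ℝ, a = fun z => if |z| < H / 2 then
      s * (χ (2 * s ^ 2 * (s * z)) ^ 2 * (w j (s * z) * w k (s * z))) else 0 := ⟨_, rfl⟩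
  have ham : Measurable a := by
    have := hwmeas j
    have := hwmeas k
    rw [ha]
    exact Measurable.ite (measurableSet_lt (by fun_prop) (by fun_prop)) (by fun_prop) (by fun_prop)
  have hprod : ∀ x : E3, trialEll χ (w j) U H x * trialEll χ (w k) U H x =
      a (x 2) * (fun y => U y ^ 2) ((hEll H (x 2))⁻¹ • (WithLp.toLp 2 ![x 0, x 1] : E2)) := by
    intro x
    simp only [trialEll, ha, hUarg, hs2, ← hs]
    split_ifs with hz
    · rw [← hr]; ring
    · simp
  have hah : ∀ z, a z * hEll H z ^ 2 =
      s * (fun ζ => (w j ζ * w k ζ) * gMul χ s ζ) (s * z) := by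
    intro z
    simp only [ha, gMul, ← hlt]
    split_ifs with hz
    · rw [hhsq z hz, hharg]; ring
    · simp
  have hP := aux_1d χ hχm hχ01 hχ1 s hs0 hs1 (fun ζ => w j ζ * w k ζ)
    ((hwmeas j).mul (hwmeas k)) (C ^ 2 * (2 + 48 / (2 * b) ^ 4)) (by
      intro ζ
      have h1 := aux_exp b hb |ζ| (abs_nonneg ζ)
      rw [sq_abs] at h1
      rw [abs_mul]
      calc |w j ζ| * |w k ζ| * (1 + ζ ^ 2) ^ 2
          ≤ (C * Real.exp (-b * |ζ|)) * (C * Real.exp (-b * |ζ|)) * (1 + ζ ^ 2) ^ 2 := by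
            gcongr
            · exact hdecay j ζ
            · exact hdecay k ζ
        _ = C ^ 2 * (Real.exp (-b * |ζ|) ^ 2 * (1 + ζ ^ 2) ^ 2) := by ring
        _ ≤ _ := by gcongr)
  have hInteg : Integrable (fun z => a z * hEll H z ^ 2) := by
    simp only [hah]
    exact (hP.1.comp_mul_left' hs0.ne').const_mul s
  simp only [hprod]
  rw [aux_fubini a (hEll H) ham hhm (fun y => U y ^ 2) (hUmeas.pow_const 2) hUi hU1
    (fun y => sq_nonneg _) ?_ hInteg]
  · simp only [hah]
    rw [integral_const_mul, Measure.integral_comp_mul_left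
      (fun ζ => (w j ζ * w k ζ) * gMul χ s ζ), abs_of_pos (inv_pos.2 hs0), smul_eq_mul,
      mul_inv_cancel_left₀ hs0.ne', ← horth j k, hs2]
    exact hP.2
  · intro z hz
    apply hhpos
    by_contra hc
    apply hz
    simp only [ha, if_neg hc]
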